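/- Let α, β > 0, R_a, R_b ∈ ℝ³, c = α + β, ρ = αβ/c, R² = |R_a - R_b|². Then for every natural number m, ∫_{ℝ³} exp(-α|r - R_a|²) |r - R_a|^{2m} exp(-β|r - R_b|²) dr = (π^{3/2} exp(-ρR²) / (2^m c^{m+3/2})) * ∑_{j=0}^{m} 2^j * ((2m+1)!! / (2j+1)!!) * C(m, j) * (β^{2j}/c^j) * R^{2j}. -/

import Mathlib

open Real Nat Finset MeasureTheory

section GaussianMoments

variable {V : Type*} [NormedAddCommGroup V] [InnerProductSpace ℝ V] [FiniteDimensional ℝ V]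
  [MeasurableSpace V] [BorelSpace V]

theorem integrable_rexp_neg_mul_sq_norm_add {c : ℝ} (hc : 0 < c) (w : V) :
    Integrable (fun v : V ↦ Real.exp (-c * ‖v‖ ^ 2 + inner ℝ w v)) := by
  have h := (GaussianFourier.integrable_cexp_neg_mul_sq_norm_add
    (show 0 < (c : ℂ).re from hc) 1 w).norm
  refine h.congr (Filter.Eventually.of_forall fun v ↦ ?_)
  have hv : -(c : ℂ) * (‖v‖ : ℂ) ^ 2 + 1 * ((inner ℝ w v : ℝ) : ℂ)
      = ((-c * ‖v‖ ^ 2 + inner ℝ w v : ℝ) : ℂ) := by push_cast; ring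
  simp only [hv, Complex.norm_exp, Complex.ofReal_re]

theorem integral_rexp_neg_mul_sq_norm_add {c : ℝ} (hc : 0 < c) (w : V) :
    ∫ v : V, Real.exp (-c * ‖v‖ ^ 2 + inner ℝ w v)
      = (π / c) ^ (Module.finrank ℝ V / 2 : ℝ) * Real.exp (‖w‖ ^ 2 / (4 * c)) := by
  have h := GaussianFourier.integral_cexp_neg_mul_sq_norm_add
    (show 0 < (c : ℂ).re from hc) 1 w
  have hv (v : V) : Complex.exp (-(c : ℂ) * (‖v‖ : ℂ) ^ 2 + 1 * ((inner ℝ w v : ℝ) : ℂ))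
      = ((Real.exp (-c * ‖v‖ ^ 2 + inner ℝ w v) : ℝ) : ℂ) := by push_cast; ring_nf
  simp_rw [hv] at h
  rw [integral_complex_ofReal] at h
  rw [← Complex.ofReal_inj, h, Complex.ofReal_mul, Complex.ofReal_cpow (by positivity)]
  push_cast
  ring_nf

/-- Polynomial moments of a Gaussian with a linear tilt are integrable. -/
theorem integrable_norm_pow_mul_rexp {c : ℝ} (hc : 0 < c) (w : V) (k : ℕ) :
    Integrable (fun v : V ↦ ‖v‖ ^ (2 * k) * Real.exp (-c * ‖v‖ ^ 2 + inner ℝ w v)) := by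
  refine ((integrable_rexp_neg_mul_sq_norm_add (half_pos hc) w).const_mul
    (k ! / (c / 2) ^ k)).mono' (by fun_prop) (Filter.Eventually.of_forall fun v ↦ ?_)
  have h := Real.pow_div_factorial_le_exp (c / 2 * ‖v‖ ^ 2) (by positivity) k
  have hpow : ‖v‖ ^ (2 * k) ≤ k ! / (c / 2) ^ k * Real.exp (c / 2 * ‖v‖ ^ 2) := by
    rw [div_le_iff₀ (by positivity), mul_pow, ← pow_mul] at h
    rw [div_mul_eq_mul_div, le_div_iff₀ (by positivity)]
    linarith
  rw [Real.norm_of_nonneg (by positivity)]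
  calc ‖v‖ ^ (2 * k) * Real.exp (-c * ‖v‖ ^ 2 + inner ℝ w v)
      ≤ k ! / (c / 2) ^ k * Real.exp (c / 2 * ‖v‖ ^ 2)
          * Real.exp (-c * ‖v‖ ^ 2 + inner ℝ w v) := by gcongr
    _ = k ! / (c / 2) ^ k * Real.exp (-(c / 2) * ‖v‖ ^ 2 + inner ℝ w v) := by
      rw [mul_assoc, ← Real.exp_add]; ring_nf

theorem hasDerivAt_integral_norm_pow_mul_rexp {c : ℝ} (hc : 0 < c) (w : V) (k : ℕ) :
    HasDerivAt
      (fun b : ℝ ↦ ∫ v : V, ‖v‖ ^ (2 * k) * Real.exp (-b * ‖v‖ ^ 2 + inner ℝ w v))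
      (-∫ v : V, ‖v‖ ^ (2 * (k + 1)) * Real.exp (-c * ‖v‖ ^ 2 + inner ℝ w v)) c := by
  rw [← integral_neg]
  refine (hasDerivAt_integral_of_dominated_loc_of_deriv_le (s := Set.Ioi (c / 2))
    (F' := fun b v ↦ -(‖v‖ ^ (2 * (k + 1)) * Real.exp (-b * ‖v‖ ^ 2 + inner ℝ w v)))
    (Ioi_mem_nhds (half_lt_self hc)) (Filter.Eventually.of_forall fun b ↦ by fun_prop)
    (integrable_norm_pow_mul_rexp hc w k) (by fun_prop)
    (Filter.Eventually.of_forall fun v b hb ↦ ?_)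
    (integrable_norm_pow_mul_rexp (half_pos hc) w (k + 1))
    (Filter.Eventually.of_forall fun v b _ ↦ ?_)).2
  · rw [norm_neg, Real.norm_of_nonneg (by positivity)]
    have : c / 2 ≤ b := (Set.mem_Ioi.1 hb).le
    gcongr
  · have h : HasDerivAt (fun b : ℝ ↦ -b * ‖v‖ ^ 2 + inner ℝ w v) (-1 * ‖v‖ ^ 2) b :=
      (((hasDerivAt_id b).neg).mul_const _).add_const _
    refine (h.exp.const_mul (‖v‖ ^ (2 * k))).congr_deriv ?_
    ring

end GaussianMoments

/-- The coefficients of the closed form of the `2m`-th radial moment of a tilted Gaussian on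
three-dimensional space. -/
noncomputable def gaussianMomentCoeff (m j : ℕ) : ℝ :=
  2 ^ j / 2 ^ m * (((2 * m + 1)‼ : ℝ) / ((2 * j + 1)‼ : ℝ)) * (m.choose j : ℝ)

theorem gaussianMomentCoeff_self_succ (m : ℕ) : gaussianMomentCoeff m (m + 1) = 0 := by
  simp [gaussianMomentCoeff]

theorem gaussianMomentCoeff_succ_zero (m : ℕ) :
    gaussianMomentCoeff (m + 1) 0 = (m + 3 / 2) * gaussianMomentCoeff m 0 := by
  simp only [gaussianMomentCoeff, show 2 * (m + 1) + 1 = 2 * m + 1 + 2 by ring,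
    Nat.doubleFactorial_add_two, Nat.choose_zero_right]
  push_cast
  field_simp
  ring

theorem gaussianMomentCoeff_succ_succ (m j : ℕ) :
    gaussianMomentCoeff (m + 1) (j + 1)
      = gaussianMomentCoeff m j
        + (m + (j + 1) + 3 / 2) * gaussianMomentCoeff m (j + 1) := by
  have hchoose : (m.choose (j + 1) : ℝ) * (j + 1) = m.choose j * (m - j) := by
    rcases le_or_gt j m with h | h
    · rw [← Nat.cast_sub h]
      exact_mod_cast Nat.choose_succ_right_eq m j
    · simp [Nat.choose_eq_zero_of_lt h, Nat.choose_eq_zero_of_lt (Nat.lt_succ_of_lt h)]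
  have hE : ((2 * j + 1)‼ : ℝ) ≠ 0 := by
    exact_mod_cast (Nat.doubleFactorial_pos _).ne'
  simp only [gaussianMomentCoeff, show 2 * (m + 1) + 1 = 2 * m + 1 + 2 by ring,
    show 2 * (j + 1) + 1 = 2 * j + 1 + 2 by ring, Nat.doubleFactorial_add_two,
    Nat.choose_succ_succ']
  push_cast
  have h3 : (2 * (j : ℝ) + 1 + 2) ≠ 0 := by positivity
  field_simp
  linear_combination (-8 * 2 ^ j * 2 ^ m : ℝ) * hchoose

/-- The closed form of the tilted Gaussian moments in dimension three, as a function of the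
exponent `c`, without the factor `π ^ (3 / 2)`. -/
noncomputable def gaussianMoment (s : ℝ) (m : ℕ) (c : ℝ) : ℝ :=
  Real.exp (s / c) * ∑ j ∈ Finset.range (m + 1),
    gaussianMomentCoeff m j * s ^ j * c ^ (-((m : ℝ) + j + 3 / 2))

theorem hasDerivAt_gaussianMoment (s : ℝ) (m : ℕ) {c : ℝ} (hc : 0 < c) :
    HasDerivAt (gaussianMoment s m) (-gaussianMoment s (m + 1) c) c := by
  have hexp : HasDerivAt (fun c : ℝ ↦ Real.exp (s / c)) (Real.exp (s / c) * (s * -(c ^ 2)⁻¹)) c := by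
    simpa only [div_eq_mul_inv] using ((hasDerivAt_inv hc.ne').const_mul s).exp
  have hsum := HasDerivAt.fun_sum (u := Finset.range (m + 1)) fun j _ ↦
    (Real.hasDerivAt_rpow_const (x := c) (p := -((m : ℝ) + j + 3 / 2))
      (Or.inl hc.ne')).const_mul (gaussianMomentCoeff m j * s ^ j)
  refine (hexp.mul hsum).congr_deriv ?_
  set X : ℕ → ℝ := fun j ↦ s ^ j * c ^ (-((m : ℝ) + 1 + j + 3 / 2)) with hX
  have hshift : s * (c ^ 2)⁻¹ * ∑ j ∈ Finset.range (m + 1),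
      gaussianMomentCoeff m j * s ^ j * c ^ (-((m : ℝ) + j + 3 / 2))
      = ∑ j ∈ Finset.range (m + 1), gaussianMomentCoeff m j * X (j + 1) := by
    rw [Finset.mul_sum]
    refine Finset.sum_congr rfl fun j _ ↦ ?_
    have : c ^ (-((m : ℝ) + 1 + (j + 1) + 3 / 2))
        = c ^ (-((m : ℝ) + j + 3 / 2)) * (c ^ 2)⁻¹ := by
      rw [← Real.rpow_natCast, ← Real.rpow_neg hc.le, ← Real.rpow_add hc]
      congr 1; push_cast; ring
    simp only [hX]
    push_cast
    rw [this]
    ring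
  have hderiv : ∑ j ∈ Finset.range (m + 1), gaussianMomentCoeff m j * s ^ j
        * (-((m : ℝ) + j + 3 / 2) * c ^ (-((m : ℝ) + j + 3 / 2) - 1))
      = -∑ j ∈ Finset.range (m + 2),
          ((m : ℝ) + j + 3 / 2) * gaussianMomentCoeff m j * X j := by
    rw [Finset.sum_range_succ _ (m + 1), gaussianMomentCoeff_self_succ, mul_zero, zero_mul,
      add_zero, ← Finset.sum_neg_distrib]
    refine Finset.sum_congr rfl fun j _ ↦ ?_
    rw [show -((m : ℝ) + j + 3 / 2) - 1 = -((m : ℝ) + 1 + j + 3 / 2) by ring]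
    simp only [hX]
    ring
  have hnext : gaussianMoment s (m + 1) c = Real.exp (s / c) *
      (∑ j ∈ Finset.range (m + 1), gaussianMomentCoeff m j * X (j + 1)
        + ∑ j ∈ Finset.range (m + 2),
          ((m : ℝ) + j + 3 / 2) * gaussianMomentCoeff m j * X j) := by
    have : gaussianMoment s (m + 1) c = Real.exp (s / c) *
        ∑ j ∈ Finset.range (m + 2), gaussianMomentCoeff (m + 1) j * X j := by
      simp only [gaussianMoment, hX, Nat.cast_add, Nat.cast_one, mul_assoc]
    rw [this, Finset.sum_range_succ', Finset.sum_range_succ' _ (m + 1), ← add_assoc,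
      ← Finset.sum_add_distrib, gaussianMomentCoeff_succ_zero]
    congr 2
    · refine Finset.sum_congr rfl fun j _ ↦ ?_
      rw [gaussianMomentCoeff_succ_succ]
      push_cast
      ring
    · simp
  rw [hnext, hderiv, ← hshift]
  ring

theorem integral_norm_pow_mul_rexp (w : EuclideanSpace ℝ (Fin 3)) (m : ℕ) {c : ℝ} (hc : 0 < c) :
    ∫ v : EuclideanSpace ℝ (Fin 3),
        ‖v‖ ^ (2 * m) * Real.exp (-c * ‖v‖ ^ 2 + inner ℝ w v)
      = π ^ ((3 : ℝ) / 2) * gaussianMoment (‖w‖ ^ 2 / 4) m c := by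
  induction m generalizing c with
  | zero =>
    simp only [mul_zero, pow_zero, one_mul]
    rw [integral_rexp_neg_mul_sq_norm_add hc, Real.div_rpow pi_pos.le hc.le]
    simp [gaussianMoment, gaussianMomentCoeff, Real.rpow_neg hc.le, div_div]
    ring
  | succ m ih =>
    have hmoment : (fun b ↦ π ^ ((3 : ℝ) / 2) * gaussianMoment (‖w‖ ^ 2 / 4) m b) =ᶠ[nhds c]
        fun b ↦ ∫ v : EuclideanSpace ℝ (Fin 3),
          ‖v‖ ^ (2 * m) * Real.exp (-b * ‖v‖ ^ 2 + inner ℝ w v) :=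
      Filter.eventually_of_mem (Ioi_mem_nhds hc) fun b hb ↦ (ih hb).symm
    have h := (hasDerivAt_integral_norm_pow_mul_rexp hc w m).congr_of_eventuallyEq hmoment
    have := h.unique ((hasDerivAt_gaussianMoment (‖w‖ ^ 2 / 4) m hc).const_mul _)
    linarith

theorem two_center_gaussian_integral (α β : ℝ) (hα : 0 < α) (hβ : 0 < β)
    (Ra Rb : EuclideanSpace ℝ (Fin 3)) (m : ℕ) :
    ∫ r : EuclideanSpace ℝ (Fin 3),
        Real.exp (-α * ‖r - Ra‖ ^ 2) * ‖r - Ra‖ ^ (2 * m) * Real.exp (-β * ‖r - Rb‖ ^ 2)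
      = (π ^ ((3 : ℝ) / 2) * Real.exp (-(α * β / (α + β)) * ‖Ra - Rb‖ ^ 2) /
          ((2 : ℝ) ^ m * (α + β) ^ ((m : ℝ) + 3 / 2))) *
        ∑ j ∈ Finset.range (m + 1),
          (2 : ℝ) ^ j * (((2 * m + 1)‼ : ℝ) / ((2 * j + 1)‼ : ℝ)) * (m.choose j : ℝ) *
            (β ^ (2 * j) / (α + β) ^ j) * ‖Ra - Rb‖ ^ (2 * j) := by
  have hc : 0 < α + β := add_pos hα hβ
  set w : EuclideanSpace ℝ (Fin 3) := Rb - Ra with hw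
  have hR : ‖Ra - Rb‖ = ‖w‖ := norm_sub_rev _ _
  have hshift : ∫ r : EuclideanSpace ℝ (Fin 3),
        Real.exp (-α * ‖r - Ra‖ ^ 2) * ‖r - Ra‖ ^ (2 * m) * Real.exp (-β * ‖r - Rb‖ ^ 2)
      = ∫ v : EuclideanSpace ℝ (Fin 3), Real.exp (-β * ‖w‖ ^ 2) *
        (‖v‖ ^ (2 * m) * Real.exp (-(α + β) * ‖v‖ ^ 2 + inner ℝ ((2 * β) • w) v)) := by
    rw [← integral_add_right_eq_self _ Ra]
    refine integral_congr_ae (Filter.Eventually.of_forall fun v ↦ ?_)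
    have hv : v + Ra - Rb = v - w := by rw [hw]; abel
    simp only [add_sub_cancel_right, hv]
    rw [mul_right_comm, ← Real.exp_add, mul_left_comm, ← Real.exp_add, mul_comm,
      norm_sub_sq_real, real_inner_smul_left, real_inner_comm]
    ring_nf
  have hnorm : ‖(2 * β) • w‖ ^ 2 / 4 = β ^ 2 * ‖w‖ ^ 2 := by
    rw [norm_smul, Real.norm_of_nonneg (by positivity)]
    ring
  have hexp : Real.exp (-(α * β / (α + β)) * ‖w‖ ^ 2)
      = Real.exp (-β * ‖w‖ ^ 2) * Real.exp (β ^ 2 * ‖w‖ ^ 2 / (α + β)) := by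
    rw [← Real.exp_add]
    congr 1
    field_simp
    ring
  rw [hshift, integral_const_mul, integral_norm_pow_mul_rexp _ m hc, hnorm, hR, hexp,
    gaussianMoment, Finset.mul_sum, Finset.mul_sum, Finset.mul_sum, Finset.mul_sum]
  refine Finset.sum_congr rfl fun j _ ↦ ?_
  have hpow : (α + β) ^ (-((m : ℝ) + j + 3 / 2))
      = ((α + β) ^ ((m : ℝ) + 3 / 2))⁻¹ * ((α + β) ^ j)⁻¹ := by
    rw [← Real.rpow_natCast, ← Real.rpow_neg hc.le, ← Real.rpow_neg hc.le, ← Real.rpow_add hc]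
    congr 1; ring
  rw [hpow, gaussianMomentCoeff]
  ring
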